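/- Characterization of the space C_{-1,(k)}(0,∞): let (κ, k) ∈ L₁. A function f belongs to C_{-1,(k)}(0,∞), i.e. f = k * φ for some φ ∈ C_{-1}(0,∞), if and only if the function κ * f belongs to C¹_{-1}(0,∞) and lim_{t→0+} (κ * f)(t) = 0. -/

import Mathlib

open Real Filter MeasureTheory intervalIntegral

/-- The Laplace convolution `(f * g)(t) = ∫_0^t f(t-τ) g(τ) dτ`. -/
noncomputable def lconv (f g : ℝ → ℝ) : ℝ → ℝ :=
  fun t => ∫ τ in (0:ℝ)..t, f (t - τ) * g τ

/-- The space `C_{-1}(0,∞)`: functions representable as `t^p f₁(t)` with `p > -1`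
and `f₁` continuous on `[0,∞)`. -/
def CMinusOne (f : ℝ → ℝ) : Prop :=
  ∃ p : ℝ, p > -1 ∧ ∃ f₁ : ℝ → ℝ, ContinuousOn f₁ (Set.Ici 0) ∧
    ∀ t > (0:ℝ), f t = t ^ p * f₁ t


/-- The class `L₁` of Sonin kernel pairs: `κ, k ∈ C_{-1}(0,∞)` with `(κ * k)(t) = 1`
for all `t > 0`. -/
def SoninPair (κ k : ℝ → ℝ) : Prop :=
  CMinusOne κ ∧ CMinusOne k ∧ ∀ t > (0:ℝ), lconv κ k t = 1


/-- The space `C¹_{-1}(0,∞)`: functions from `C_{-1}(0,∞)` that are differentiable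
on `(0,∞)`, extend continuously to `t = 0`, and whose derivative belongs to
`C_{-1}(0,∞)`. -/
def CMinusOneC1 (f : ℝ → ℝ) : Prop :=
  CMinusOne f ∧ (∀ t > (0:ℝ), DifferentiableAt ℝ f t) ∧
    (∃ c : ℝ, Tendsto f (nhdsWithin 0 (Set.Ioi 0)) (nhds c)) ∧
    CMinusOne (deriv f)

/-!
Associativity of the Laplace convolution and `κ * k = 1` turn `f = k * φ` into `κ * f = 1 * φ`,
the primitive of `φ`; conversely `κ * f = 1 * φ` gives `1 * f = k * (κ * f) = 1 * (k * φ)`, which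
may be differentiated. Hence the claim is the fundamental theorem of calculus for `κ * f`.

The natural setting for this is the class of functions continuous on `(0,∞)` and integrable near
`0`. It is closed under convolution because in each half of
`∫_0^t f(t-τ) g(τ) dτ = ∫_0^{t/2} f(t-τ) g(τ) dτ + ∫_0^{t/2} g(t-τ) f(τ) dτ`
one factor stays away from its singularity.
-/

section Development

open Set Topology

variable {a b c f g h κ k φ F : ℝ → ℝ} {t : ℝ}

/-- The functions continuous on `(0,∞)` and integrable near `0`, a class containing `C_{-1}(0,∞)`
in which every convolution exists pointwise. As for `CMinusOne`, the values on `(-∞,0]` are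
irrelevant. -/
structure ContLocIntegrable (f : ℝ → ℝ) : Prop where
  continuousOn : ContinuousOn f (Ioi 0)
  intervalIntegrable : ∀ t > (0 : ℝ), IntervalIntegrable f volume 0 t

theorem CMinusOne.congr (hf : CMinusOne f) (hgf : ∀ t > (0 : ℝ), g t = f t) : CMinusOne g := by
  obtain ⟨p, hp, f₁, hf₁, hf_eq⟩ := hf
  exact ⟨p, hp, f₁, hf₁, fun t ht ↦ (hgf t ht).trans (hf_eq t ht)⟩

theorem CMinusOne.of_continuousOn (hf : ContinuousOn f (Ici 0)) : CMinusOne f :=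
  ⟨0, by norm_num, f, hf, fun t _ ↦ by rw [rpow_zero, one_mul]⟩

theorem CMinusOne.contLocIntegrable (hf : CMinusOne f) : ContLocIntegrable f := by
  obtain ⟨p, hp, f₁, hf₁, hf_eq⟩ := hf
  constructor
  · have hrpow : ContinuousOn (fun t : ℝ ↦ t ^ p) (Ioi 0) :=
      continuousOn_id.rpow_const fun t ht ↦ Or.inl (ne_of_gt ht)
    exact (hrpow.mul (hf₁.mono Ioi_subset_Ici_self)).congr hf_eq
  · intro t ht
    have hf₁t : ContinuousOn f₁ (uIcc 0 t) :=
      hf₁.mono (uIcc_of_le ht.le ▸ Icc_subset_Ici_self)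
    refine ((intervalIntegrable_rpow' hp).mul_continuousOn hf₁t).congr fun s hs ↦ ?_
    rw [uIoc_of_le ht.le] at hs
    exact (hf_eq s hs.1).symm

namespace ContLocIntegrable

theorem hasDerivAt_integral (hf : ContLocIntegrable f) (ht : 0 < t) :
    HasDerivAt (fun u ↦ ∫ s in (0 : ℝ)..u, f s) (f t) t :=
  integral_hasDerivAt_right (hf.intervalIntegrable t ht)
    (hf.continuousOn.stronglyMeasurableAtFilter isOpen_Ioi t ht)
    (hf.continuousOn.continuousAt (Ioi_mem_nhds ht))

theorem eq_of_integral_eq (hf : ContLocIntegrable f) (hg : ContLocIntegrable g)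
    (hfg : ∀ t > (0 : ℝ), ∫ s in (0 : ℝ)..t, f s = ∫ s in (0 : ℝ)..t, g s) (ht : 0 < t) :
    f t = g t := by
  refine (hf.hasDerivAt_integral ht).unique
    ((hg.hasDerivAt_integral ht).congr_of_eventuallyEq ?_)
  filter_upwards [Ioi_mem_nhds ht] with u hu using hfg u hu

end ContLocIntegrable

theorem continuousOn_integral_Ici (hf : ∀ t > (0 : ℝ), IntervalIntegrable f volume 0 t) :
    ContinuousOn (fun u ↦ ∫ s in (0 : ℝ)..u, f s) (Ici 0) := by
  intro t (ht : 0 ≤ t)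
  have hIcc := continuousOn_primitive_interval' (hf (t + 1) (by linarith)) left_mem_uIcc
  rw [uIcc_of_le (by linarith)] at hIcc
  refine (hIcc t ⟨ht, by linarith⟩).mono_of_mem_nhdsWithin ?_
  exact inter_mem_nhdsWithin _ (Iic_mem_nhds (by linarith))

theorem exists_eq_integral_iff_cMinusOneC1 :
    (∃ φ, CMinusOne φ ∧ ∀ t > (0 : ℝ), F t = ∫ s in (0 : ℝ)..t, φ s) ↔
      CMinusOneC1 F ∧ Tendsto F (𝓝[>] 0) (𝓝 0) := by
  constructor
  · rintro ⟨φ, hφ, hF⟩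
    have hint := continuousOn_integral_Ici hφ.contLocIntegrable.intervalIntegrable
    have hderiv (t : ℝ) (ht : 0 < t) : HasDerivAt F (φ t) t := by
      refine (hφ.contLocIntegrable.hasDerivAt_integral ht).congr_of_eventuallyEq ?_
      filter_upwards [Ioi_mem_nhds ht] with u hu using hF u hu
    have hlim : Tendsto F (𝓝[>] 0) (𝓝 0) := by
      have hlim₀ := ((hint 0 self_mem_Ici).mono Ioi_subset_Ici_self).tendsto
      rw [integral_same] at hlim₀
      exact hlim₀.congr' (eventually_mem_nhdsWithin.mono fun u hu ↦ (hF u hu).symm)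
    exact ⟨⟨(CMinusOne.of_continuousOn hint).congr hF, fun t ht ↦ (hderiv t ht).differentiableAt,
      ⟨0, hlim⟩, hφ.congr fun t ht ↦ (hderiv t ht).deriv⟩, hlim⟩
  · rintro ⟨⟨-, hdiff, -, hderiv⟩, hlim⟩
    refine ⟨deriv F, hderiv, fun t ht ↦ ?_⟩
    rw [integral_eq_sub_of_hasDerivAt_of_tendsto ht (fun s hs ↦ (hdiff s hs.1).hasDerivAt)
      (hderiv.contLocIntegrable.intervalIntegrable t ht) hlim
      (hdiff t ht).continuousAt.continuousWithinAt, sub_zero]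

theorem lconv_comm (f g : ℝ → ℝ) : lconv f g = lconv g f := by
  ext t
  simpa only [lconv, sub_sub_cancel, sub_self, sub_zero, mul_comm] using
    (integral_comp_sub_left (a := 0) (b := t) (fun τ ↦ f (t - τ) * g τ) t).symm

theorem lconv_congr_right (hgh : ∀ t > (0 : ℝ), g t = h t) (ht : 0 < t) :
    lconv f g t = lconv f h t := by
  refine integral_congr_Ioo_of_le ht.le fun s hs ↦ ?_
  simp only [hgh s hs.1]

theorem lconv_congr_left (hfh : ∀ t > (0 : ℝ), f t = h t) (ht : 0 < t) :
    lconv f g t = lconv h g t := by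
  rw [lconv_comm f, lconv_comm h]
  exact lconv_congr_right hfh ht

theorem one_lconv (f : ℝ → ℝ) (t : ℝ) : lconv 1 f t = ∫ s in (0 : ℝ)..t, f s := by
  simp only [lconv, Pi.one_apply, one_mul]

theorem convolution_indicator_eq_indicator_lconv (f g : ℝ → ℝ) :
    convolution (indicator (Ioi 0) g) (indicator (Ioi 0) f) (ContinuousLinearMap.mul ℝ ℝ) volume =
      indicator (Ioi 0) (lconv f g) := by
  rw [← posConvolution_eq_convolution_indicator g f (ContinuousLinearMap.mul ℝ ℝ) volume]
  refine congrArg (indicator (Ioi 0)) (funext fun t ↦ integral_congr fun τ _ ↦ ?_)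
  exact mul_comm (g τ) (f (t - τ))

theorem intervalIntegrable_indicator_Ioi (hg : ∀ t > (0 : ℝ), IntervalIntegrable g volume 0 t)
    {r s : ℝ} (hr : r < 0) (hs : 0 < s) : IntervalIntegrable (indicator (Ioi 0) g) volume r s := by
  refine (IntervalIntegrable.congr (f := 0) (fun τ hτ ↦ ?_) intervalIntegrable_const).trans
    ((hg s hs).congr fun τ hτ ↦ ?_)
  · rw [uIoc_of_le hr.le] at hτ
    exact (indicator_of_notMem (notMem_Ioi.2 hτ.2) g).symm
  · rw [uIoc_of_le hs.le] at hτ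
    exact (indicator_of_mem (mem_Ioi.2 hτ.1) g).symm

theorem continuousAt_integral_comp_sub_mul (hf : Continuous f)
    (hg : ∀ t > (0 : ℝ), IntervalIntegrable g volume 0 t) {t₀ s₀ : ℝ} (hs₀ : 0 < s₀) :
    ContinuousAt (fun p : ℝ × ℝ ↦ ∫ τ in (0 : ℝ)..p.2, f (p.1 - τ) * g τ) (t₀, s₀) := by
  set g₀ := indicator (Ioi 0) g with hg₀_def
  have hg₀ : IntervalIntegrable g₀ volume (-1) (s₀ + 1) :=
    intervalIntegrable_indicator_Ioi hg (by norm_num) (by linarith)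
  obtain ⟨M, hM⟩ := (isCompact_Icc (a := t₀ - s₀ - 2) (b := t₀ + 2)).exists_bound_of_continuousOn
    hf.continuousOn
  have hcont : ContinuousAt (fun p : ℝ × ℝ ↦ ∫ τ in (0 : ℝ)..p.2, f (p.1 - τ) * g₀ τ)
      (t₀, s₀) := by
    refine continuousAt_parametric_primitive_of_dominated (F := fun t τ ↦ f (t - τ) * g₀ τ)
      (fun τ ↦ M * ‖g₀ τ‖) (-1) (s₀ + 1) (fun t ↦ ?_) ?_ (hg₀.norm.const_mul M)
      (Eventually.of_forall fun τ ↦ by fun_prop)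
      ⟨by norm_num, by linarith⟩ ⟨by linarith, by linarith⟩ (measure_singleton s₀)
    · exact (hf.comp (continuous_sub_left t)).aestronglyMeasurable.mul
        hg₀.def'.aestronglyMeasurable
    · filter_upwards [Icc_mem_nhds (sub_one_lt t₀) (lt_add_one t₀)] with t ht
      refine (ae_restrict_iff' measurableSet_uIoc).2 (Eventually.of_forall fun τ hτ ↦ ?_)
      rw [uIoc_of_le (by linarith)] at hτ
      rw [norm_mul]
      gcongr
      exact hM _ ⟨by linarith [ht.1, hτ.2], by linarith [ht.2, hτ.1]⟩
  refine hcont.congr ?_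
  filter_upwards [continuousAt_snd (Ioi_mem_nhds hs₀)] with p hp
  refine integral_congr_Ioo_of_le (le_of_lt hp) fun τ hτ ↦ ?_
  simp only [hg₀_def, indicator_of_mem (mem_Ioi.2 hτ.1)]

namespace ContLocIntegrable

theorem one : ContLocIntegrable 1 :=
  ⟨continuousOn_const, fun _ _ ↦ intervalIntegrable_const⟩

theorem norm (hf : ContLocIntegrable f) : ContLocIntegrable (‖f ·‖) :=
  ⟨hf.continuousOn.norm, fun t ht ↦ (hf.intervalIntegrable t ht).norm⟩

theorem aestronglyMeasurable_indicator (hf : ContLocIntegrable f) :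
    AEStronglyMeasurable (indicator (Ioi 0) f) volume :=
  (aestronglyMeasurable_indicator_iff measurableSet_Ioi).2
    (hf.continuousOn.aestronglyMeasurable measurableSet_Ioi)

theorem intervalIntegrable_comp_sub_mul_half (hf : ContLocIntegrable f) (hg : ContLocIntegrable g)
    (ht : 0 < t) : IntervalIntegrable (fun τ ↦ f (t - τ) * g τ) volume 0 (t / 2) := by
  refine (hg.intervalIntegrable _ (half_pos ht)).continuousOn_mul
    (hf.continuousOn.comp (by fun_prop) fun τ hτ ↦ ?_)
  rw [uIcc_of_le (half_pos ht).le] at hτ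
  exact sub_pos.2 (hτ.2.trans_lt (half_lt_self ht))

theorem intervalIntegrable_comp_sub_mul_half_right (hf : ContLocIntegrable f)
    (hg : ContLocIntegrable g) (ht : 0 < t) :
    IntervalIntegrable (fun τ ↦ f (t - τ) * g τ) volume (t / 2) t := by
  simpa only [sub_sub_cancel, sub_zero, sub_half, mul_comm] using
    ((hg.intervalIntegrable_comp_sub_mul_half hf ht).comp_sub_left t).symm

theorem intervalIntegrable_comp_sub_mul (hf : ContLocIntegrable f) (hg : ContLocIntegrable g)
    (ht : 0 < t) : IntervalIntegrable (fun τ ↦ f (t - τ) * g τ) volume 0 t :=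
  (hf.intervalIntegrable_comp_sub_mul_half hg ht).trans
    (hf.intervalIntegrable_comp_sub_mul_half_right hg ht)

theorem lconv_eq_add_half (hf : ContLocIntegrable f) (hg : ContLocIntegrable g) (ht : 0 < t) :
    lconv f g t = (∫ τ in (0 : ℝ)..t / 2, f (t - τ) * g τ) +
      ∫ τ in (0 : ℝ)..t / 2, g (t - τ) * f τ := by
  have hright : ∫ τ in (0 : ℝ)..t / 2, g (t - τ) * f τ = ∫ τ in t / 2..t, f (t - τ) * g τ := by
    simpa only [sub_sub_cancel, sub_zero, sub_half, mul_comm] using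
      integral_comp_sub_left (a := 0) (b := t / 2) (fun τ ↦ f (t - τ) * g τ) t
  rw [hright, integral_add_adjacent_intervals (hf.intervalIntegrable_comp_sub_mul_half hg ht)
    (hf.intervalIntegrable_comp_sub_mul_half_right hg ht), lconv]

theorem continuousOn_integral_half (hf : ContLocIntegrable f) (hg : ContLocIntegrable g) :
    ContinuousOn (fun t ↦ ∫ τ in (0 : ℝ)..t / 2, f (t - τ) * g τ) (Ioi 0) := by
  intro t₀ (ht₀ : 0 < t₀)
  -- On `(0, t / 2)` with `t` near `t₀`, the shifted factor only sees values of `f` on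
  -- `[t₀ / 4, ∞)`, so it can be replaced by a function continuous on all of `ℝ`.
  set f₀ : ℝ → ℝ := fun x ↦ f (max x (t₀ / 4))
  have hf₀ : Continuous f₀ := hf.continuousOn.comp_continuous (by fun_prop)
    fun x ↦ lt_max_of_lt_right (show 0 < t₀ / 4 by positivity)
  have hcont : ContinuousAt (fun t ↦ ∫ τ in (0 : ℝ)..t / 2, f₀ (t - τ) * g τ) t₀ :=
    (continuousAt_integral_comp_sub_mul hf₀ hg.intervalIntegrable (half_pos ht₀)).comp
      (f := fun t ↦ (t, t / 2)) (by fun_prop)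
  refine (hcont.congr ?_).continuousWithinAt
  filter_upwards [Ioi_mem_nhds (half_lt_self ht₀)] with t (ht : t₀ / 2 < t)
  refine integral_congr fun τ hτ ↦ ?_
  rw [uIcc_of_le (by linarith)] at hτ
  simp only [f₀, max_eq_left (show t₀ / 4 ≤ t - τ by linarith [hτ.2])]

theorem continuousOn_lconv (hf : ContLocIntegrable f) (hg : ContLocIntegrable g) :
    ContinuousOn (lconv f g) (Ioi 0) :=
  ((hf.continuousOn_integral_half hg).add (hg.continuousOn_integral_half hf)).congr
    fun _ ht ↦ hf.lconv_eq_add_half hg ht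

protected theorem lconv (hf : ContLocIntegrable f) (hg : ContLocIntegrable g) :
    ContLocIntegrable (lconv f g) := by
  refine ⟨hf.continuousOn_lconv hg, fun T hT ↦ ?_⟩
  -- Truncating both factors to `(0, T]` makes them integrable and keeps their convolution
  -- on `(0, T]`.
  have htrunc {u : ℝ → ℝ} (hu : ContLocIntegrable u) :
      IntegrableOn (indicator (Ioc 0 T) u) (Ioi 0) volume :=
    ((integrable_indicator_iff measurableSet_Ioc).2
      ((intervalIntegrable_iff_integrableOn_Ioc_of_le hT.le).1
        (hu.intervalIntegrable T hT))).integrableOn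
  have hconv := integrable_posConvolution (htrunc hg) (htrunc hf) (ContinuousLinearMap.mul ℝ ℝ)
  refine (intervalIntegrable_iff_integrableOn_Ioc_of_le hT.le).2
    (hconv.integrableOn.congr_fun (fun t ht ↦ ?_) measurableSet_Ioc)
  rw [posConvolution, indicator_of_mem (mem_Ioi.2 ht.1)]
  refine integral_congr_Ioo_of_le ht.1.le fun τ hτ ↦ ?_
  have hτ_mem : τ ∈ Ioc 0 T := ⟨hτ.1, hτ.2.le.trans ht.2⟩
  have htτ_mem : t - τ ∈ Ioc 0 T := ⟨sub_pos.2 hτ.2, by linarith [hτ.1, ht.2]⟩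
  simp only [indicator_of_mem hτ_mem, indicator_of_mem htτ_mem, ContinuousLinearMap.mul_apply',
    mul_comm]

theorem convolutionExistsAt (hf : ContLocIntegrable f) (hg : ContLocIntegrable g) (t : ℝ) :
    ConvolutionExistsAt (indicator (Ioi 0) g) (indicator (Ioi 0) f) t
      (ContinuousLinearMap.mul ℝ ℝ) volume := by
  have hsupp : (fun τ ↦ ContinuousLinearMap.mul ℝ ℝ (indicator (Ioi 0) g τ)
      (indicator (Ioi 0) f (t - τ))) = indicator (Ioo 0 t) fun τ ↦ f (t - τ) * g τ := by
    ext τ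
    simp only [ContinuousLinearMap.mul_apply', indicator_apply, mem_Ioi, mem_Ioo, sub_pos]
    split_ifs <;> grind
  rw [ConvolutionExistsAt, hsupp, integrable_indicator_iff measurableSet_Ioo]
  rcases le_or_gt t 0 with ht | ht
  · rw [Ioo_eq_empty ht.not_gt]
    exact integrableOn_empty
  · exact (intervalIntegrable_iff_integrableOn_Ioo_of_le ht.le).1
      (hf.intervalIntegrable_comp_sub_mul hg ht)

theorem lconv_assoc (ha : ContLocIntegrable a) (hb : ContLocIntegrable b)
    (hc : ContLocIntegrable c) (ht : 0 < t) :
    lconv (lconv a b) c t = lconv a (lconv b c) t := by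
  have norm_indicator (u : ℝ → ℝ) :
      (fun x ↦ ‖indicator (Ioi 0) u x‖) = indicator (Ioi 0) (‖u ·‖) :=
    funext fun _ ↦ norm_indicator_eq_indicator_norm ..
  have hassoc := convolution_assoc (μ := volume) (ν := volume) (ContinuousLinearMap.mul ℝ ℝ)
    (ContinuousLinearMap.mul ℝ ℝ) (ContinuousLinearMap.mul ℝ ℝ) (ContinuousLinearMap.mul ℝ ℝ)
    (fun x y z ↦ mul_assoc x y z) (x₀ := t) hc.aestronglyMeasurable_indicator
    hb.aestronglyMeasurable_indicator ha.aestronglyMeasurable_indicator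
    (Eventually.of_forall (hb.convolutionExistsAt hc))
    (by simpa only [norm_indicator] using
      Eventually.of_forall (ha.norm.convolutionExistsAt hb.norm))
    (by simpa only [norm_indicator, convolution_indicator_eq_indicator_lconv] using
      (ha.norm.lconv hb.norm).convolutionExistsAt hc.norm t)
  simpa only [convolution_indicator_eq_indicator_lconv, indicator_of_mem (mem_Ioi.2 ht)] using
    hassoc.symm

end ContLocIntegrable

theorem lconv_lconv_eq_integral (hκ : ContLocIntegrable κ) (hk : ContLocIntegrable k)
    (hf : ContLocIntegrable f) (hκk : ∀ t > (0 : ℝ), lconv κ k t = 1) (ht : 0 < t) :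
    lconv κ (lconv k f) t = ∫ s in (0 : ℝ)..t, f s := by
  rw [← hκ.lconv_assoc hk hf ht, lconv_congr_left hκk ht]
  exact one_lconv f t

theorem eq_lconv_iff_lconv_eq_integral (hκ : ContLocIntegrable κ) (hk : ContLocIntegrable k)
    (hf : ContLocIntegrable f) (hφ : ContLocIntegrable φ)
    (hκk : ∀ t > (0 : ℝ), lconv κ k t = 1) :
    (∀ t > (0 : ℝ), f t = lconv k φ t) ↔
      ∀ t > (0 : ℝ), lconv κ f t = ∫ s in (0 : ℝ)..t, φ s := by
  refine ⟨fun hfφ t ht ↦ ?_, fun hκf t ht ↦ hf.eq_of_integral_eq (hk.lconv hφ) (fun t ht ↦ ?_) ht⟩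
  · rw [lconv_congr_right hfφ ht, lconv_lconv_eq_integral hκ hk hφ hκk ht]
  · have hkκ : ∀ t > (0 : ℝ), lconv k κ t = 1 := by rwa [lconv_comm]
    calc ∫ s in (0 : ℝ)..t, f s
        = lconv k (lconv κ f) t := (lconv_lconv_eq_integral hk hκ hf hkκ ht).symm
      _ = lconv k (lconv 1 φ) t :=
        lconv_congr_right (fun s hs ↦ (hκf s hs).trans (one_lconv φ s).symm) ht
      _ = lconv (lconv 1 k) φ t := by rw [lconv_comm 1 k, hk.lconv_assoc .one hφ ht]
      _ = lconv 1 (lconv k φ) t := ContLocIntegrable.one.lconv_assoc hk hφ ht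
      _ = ∫ s in (0 : ℝ)..t, lconv k φ s := one_lconv _ t

end Development

theorem CMinusOne_k_characterization_general (κ k f : ℝ → ℝ) (hκ : ContLocIntegrable κ)
    (hk : ContLocIntegrable k) (hκk : ∀ t > (0 : ℝ), lconv κ k t = 1)
    (hf : ContLocIntegrable f) :
    (∃ φ : ℝ → ℝ, CMinusOne φ ∧ ∀ t > (0 : ℝ), f t = lconv k φ t) ↔
      (CMinusOneC1 (lconv κ f) ∧
        Tendsto (lconv κ f) (nhdsWithin 0 (Set.Ioi 0)) (nhds 0)) := by
  rw [← exists_eq_integral_iff_cMinusOneC1]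
  exact exists_congr fun φ ↦ and_congr_right fun hφ ↦
    eq_lconv_iff_lconv_eq_integral hκ hk hf hφ.contLocIntegrable hκk

/-- Characterization of the space `C_{-1,(k)}(0,∞)`: for `(κ, k) ∈ L₁` and
`f ∈ C_{-1}(0,∞)`, one has `f = k * φ` with some `φ ∈ C_{-1}(0,∞)` if and only if
`κ * f ∈ C¹_{-1}(0,∞)` and `lim_{t→0+} (κ * f)(t) = 0`. -/
theorem CMinusOne_k_characterization (κ k f : ℝ → ℝ) (hκk : SoninPair κ k)
    (hf : CMinusOne f) :
    (∃ φ : ℝ → ℝ, CMinusOne φ ∧ ∀ t > (0:ℝ), f t = lconv k φ t) ↔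
      (CMinusOneC1 (lconv κ f) ∧
        Tendsto (lconv κ f) (nhdsWithin 0 (Set.Ioi 0)) (nhds 0)) := by
  obtain ⟨hκ, hk, hone⟩ := hκk
  exact CMinusOne_k_characterization_general κ k f hκ.contLocIntegrable hk.contLocIntegrable hone
    hf.contLocIntegrable
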